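/- Let X be a finite set, L ≥ 1 a real number, ℓ ≥ m ≥ 1 integers, q ∈ (0,1)^X, and define p ∈ (0,1)^X by p_x = 1 - (1 - q_x)^L for each x ∈ X. If H ⊆ 2^X is ℓ-bounded, then E[c_q(L_m(H, X_p))] ≤ Pr[X_p ∈ ⟨H⟩] · Σ_{j=m}^{ℓ} (1/L^j) · binom(ℓ, j), where the expectation is over the random set X_p sampled from μ_p. -/

import Mathlib

/-- The product measure `μ_p` on subsets of a finite set `X`:
`μ_p(S) = ∏_{x∈S} p_x · ∏_{y∉S} (1-p_y)`. -/
def prodMeasure {X : Type*} [Fintype X] [DecidableEq X] (p : X → ℝ) (S : Finset X) : ℝ :=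
  (∏ x ∈ S, p x) * ∏ x ∈ Sᶜ, (1 - p x)

/-- `⟨G⟩`: the up-closure of a family `G` of subsets of `X`. -/
def upClosure {X : Type*} [Fintype X] [DecidableEq X] (G : Finset (Finset X)) :
    Finset (Finset X) :=
  Finset.univ.filter (fun T => ∃ S ∈ G, S ⊆ T)

/-- `e_q(H) = Σ_{S∈H} ∏_{x∈S} q_x`. -/
def eCost {X : Type*} (q : X → ℝ) (H : Finset (Finset X)) : ℝ :=
  ∑ S ∈ H, ∏ x ∈ S, q x

/-- The `q`-cost `c_q(H) = min{e_q(G) : H ⊆ ⟨G⟩}`. -/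
noncomputable def qCost {X : Type*} [Fintype X] [DecidableEq X] (q : X → ℝ)
    (H : Finset (Finset X)) : ℝ :=
  sInf {c : ℝ | ∃ G : Finset (Finset X), H ⊆ upClosure G ∧ c = eCost q G}

/-- `Pr[X_p ∈ ⟨H⟩]`, where `X_p` is sampled from `μ_p`. -/
def prInUpClosure {X : Type*} [Fintype X] [DecidableEq X] (p : X → ℝ)
    (H : Finset (Finset X)) : ℝ :=
  ∑ S ∈ upClosure H, prodMeasure p S

/-- The fragments `F(H, W) = {S \ W : S ∈ H}`. -/
def fragments {X : Type*} [DecidableEq X] (H : Finset (Finset X)) (W : Finset X) :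
    Finset (Finset X) :=
  H.image (fun S => S \ W)

/-- The minimal fragments `F*(H, W)`: inclusion-wise minimal elements of `F(H, W)`. -/
def minFragments {X : Type*} [DecidableEq X] (H : Finset (Finset X)) (W : Finset X) :
    Finset (Finset X) :=
  (fragments H W).filter (fun T => ∀ T' ∈ fragments H W, T' ⊆ T → T' = T)

/-- The large minimal fragments `L_m(H, W) = {T ∈ F*(H, W) : |T| ≥ m}`. -/
def largeFrag {X : Type*} [DecidableEq X] (m : ℕ) (H : Finset (Finset X)) (W : Finset X) :
    Finset (Finset X) :=
  (minFragments H W).filter (fun T => m ≤ T.card)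

/-- The small minimal fragments `S_m(H, W) = {T ∈ F*(H, W) : |T| < m}`. -/
def smallFrag {X : Type*} [DecidableEq X] (m : ℕ) (H : Finset (Finset X)) (W : Finset X) :
    Finset (Finset X) :=
  (minFragments H W).filter (fun T => T.card < m)

/-!
Charge a pair `(W, T)`, with `T` a large minimal fragment over `W`, to the pair `(Z, T)`, where
`Z = W ∪ T`; nothing is lost, as `W = Z \ T`. Moving `T` into the random set changes its
probability by a factor that absorbs `∏ x ∈ T, q x` at the cost of `1 / L` per element, because
`(1 - q) ^ L * (1 + L * q) ≤ exp (-L * q) * exp (L * q) = 1` says that `(1 - p) * q ≤ p / L`.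
Finally `Z` contains some `S ∈ H`, and minimality forces `T ⊆ S` for every `T` charged to `Z`, so
at most `ℓ.choose j` of these fragments have size `j`.
-/

open Finset

theorem one_sub_one_sub_rpow_mem_Icc {L a : ℝ} (hL : 0 ≤ L) (ha : a ∈ Set.Icc (0 : ℝ) 1) :
    1 - (1 - a) ^ L ∈ Set.Icc (0 : ℝ) 1 := by
  have ha' : 1 - a ∈ Set.Icc (0 : ℝ) 1 := Set.Icc.mem_iff_one_sub_mem.mp ha
  exact Set.Icc.mem_iff_one_sub_mem.mp
    ⟨Real.rpow_nonneg ha'.1 L, Real.rpow_le_one ha'.1 ha'.2 hL⟩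

theorem one_sub_rpow_mul_one_add_mul_le_one {L a : ℝ} (hL : 0 ≤ L) (ha : a ∈ Set.Icc (0 : ℝ) 1) :
    (1 - a) ^ L * (1 + L * a) ≤ 1 := by
  have hLa : 0 ≤ L * a := mul_nonneg hL ha.1
  calc (1 - a) ^ L * (1 + L * a)
      ≤ Real.exp (-a) ^ L * Real.exp (L * a) := by
        gcongr
        · exact sub_nonneg.mpr ha.2
        · exact Real.one_sub_le_exp_neg a
        · linarith [Real.add_one_le_exp (L * a)]
    _ = 1 := by
        rw [← Real.exp_mul, ← Real.exp_add, neg_mul, mul_comm a L, neg_add_cancel, Real.exp_zero]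

theorem one_sub_rpow_mul_self_le {L a : ℝ} (hL : 0 < L) (ha : a ∈ Set.Icc (0 : ℝ) 1) :
    (1 - a) ^ L * a ≤ 1 / L * (1 - (1 - a) ^ L) := by
  rw [one_div_mul_eq_div, le_div_iff₀ hL]
  linarith [one_sub_rpow_mul_one_add_mul_le_one hL.le ha]

theorem sum_pow_card_filter_powerset_le {X R : Type*} [CommSemiring R] [PartialOrder R]
    [IsOrderedRing R] {c : R} (hc : 0 ≤ c) {S : Finset X} {ℓ : ℕ} (hS : #S ≤ ℓ) (m : ℕ) :
    ∑ T ∈ S.powerset with m ≤ #T, c ^ #T ≤ ∑ j ∈ Icc m ℓ, c ^ j * (ℓ.choose j : R) := by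
  have hrange : {j ∈ range (#S + 1) | m ≤ j} ⊆ Icc m ℓ := fun j hj => by
    simp only [mem_filter, mem_range, mem_Icc] at hj ⊢
    omega
  calc ∑ T ∈ S.powerset with m ≤ #T, c ^ #T
      = ∑ j ∈ range (#S + 1) with m ≤ j, c ^ j * ((#S).choose j : R) := by
        rw [sum_filter, sum_powerset_apply_card fun j => if m ≤ j then c ^ j else 0, sum_filter]
        simp only [smul_ite, smul_zero, nsmul_eq_mul']
    _ ≤ ∑ j ∈ Icc m ℓ, c ^ j * ((#S).choose j : R) :=
        sum_le_sum_of_subset_of_nonneg hrange fun j _ _ =>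
          mul_nonneg (pow_nonneg hc j) (Nat.cast_nonneg _)
    _ ≤ ∑ j ∈ Icc m ℓ, c ^ j * (ℓ.choose j : R) := by
        gcongr

theorem sum_sum_union_eq_sum_sum_sdiff {X M : Type*} [Fintype X] [DecidableEq X]
    [AddCommMonoid M] {F : Finset X → Finset (Finset X)} {U : Finset (Finset X)}
    (hdisj : ∀ W, ∀ T ∈ F W, Disjoint W T) (hU : ∀ W, ∀ T ∈ F W, W ∪ T ∈ U)
    (g : Finset X → Finset X → M) :
    ∑ W, ∑ T ∈ F W, g (W ∪ T) T = ∑ Z ∈ U, ∑ T ∈ Z.powerset with T ∈ F (Z \ T), g Z T := by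
  rw [sum_sigma', sum_sigma']
  refine sum_bij' (fun a _ => ⟨a.1 ∪ a.2, a.2⟩) (fun b _ => ⟨b.1 \ b.2, b.2⟩) ?_ ?_ ?_ ?_ ?_
  · rintro ⟨W, T⟩ hWT
    have hT : T ∈ F W := (mem_sigma.mp hWT).2
    simp only [mem_sigma, mem_filter, mem_powerset, union_sdiff_cancel_right (hdisj W T hT)]
    exact ⟨hU W T hT, subset_union_right, hT⟩
  · rintro ⟨Z, T⟩ hZT
    exact mem_sigma.mpr ⟨mem_univ _, (mem_filter.mp (mem_sigma.mp hZT).2).2⟩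
  · rintro ⟨W, T⟩ hWT
    simp only [union_sdiff_cancel_right (hdisj W T (mem_sigma.mp hWT).2)]
  · rintro ⟨Z, T⟩ hZT
    have hTZ : T ⊆ Z := mem_powerset.mp (mem_filter.mp (mem_sigma.mp hZT).2).1
    simp only [sdiff_union_of_subset hTZ]
  · rintro ⟨W, T⟩ -
    rfl

section Fragments

variable {X : Type*} [DecidableEq X] {m : ℕ} {H : Finset (Finset X)} {S T W : Finset X}

theorem disjoint_of_mem_fragments (hT : T ∈ fragments H W) : Disjoint W T := by
  obtain ⟨S, -, rfl⟩ := mem_image.mp hT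
  exact disjoint_sdiff

theorem exists_subset_union_of_mem_fragments (hT : T ∈ fragments H W) : ∃ S ∈ H, S ⊆ W ∪ T := by
  obtain ⟨S, hS, rfl⟩ := mem_image.mp hT
  exact ⟨S, hS, le_sup_sdiff⟩

theorem subset_of_mem_minFragments (hT : T ∈ minFragments H W) (hS : S ∈ H) (hSW : S ⊆ W ∪ T) :
    T ⊆ S := by
  have hST : S \ W = T :=
    (mem_filter.mp hT).2 _ (mem_image_of_mem _ hS) (sdiff_le_iff.mpr hSW)
  exact hST ▸ sdiff_subset

theorem mem_largeFrag : T ∈ largeFrag m H W ↔ T ∈ minFragments H W ∧ m ≤ #T :=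
  mem_filter

theorem mem_fragments_of_mem_largeFrag (hT : T ∈ largeFrag m H W) : T ∈ fragments H W :=
  (mem_filter.mp (mem_largeFrag.mp hT).1).1

end Fragments

section Weights

variable {X : Type*} [Fintype X] [DecidableEq X]

theorem mem_upClosure {G : Finset (Finset X)} {T : Finset X} :
    T ∈ upClosure G ↔ ∃ S ∈ G, S ⊆ T := by
  simp only [upClosure, mem_filter_univ]

theorem subset_upClosure (G : Finset (Finset X)) : G ⊆ upClosure G :=
  fun S hS => mem_upClosure.mpr ⟨S, hS, Subset.rfl⟩

theorem qCost_le_eCost {q : X → ℝ} (hq : ∀ x, 0 ≤ q x) {G H : Finset (Finset X)}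
    (hHG : H ⊆ upClosure G) : qCost q H ≤ eCost q G := by
  refine csInf_le ⟨0, ?_⟩ ⟨G, hHG, rfl⟩
  rintro _ ⟨G', -, rfl⟩
  exact sum_nonneg fun S _ => prod_nonneg fun x _ => hq x

theorem prodMeasure_nonneg {p : X → ℝ} (hp : ∀ x, p x ∈ Set.Icc (0 : ℝ) 1) (W : Finset X) :
    0 ≤ prodMeasure p W :=
  mul_nonneg (prod_nonneg fun x _ => (hp x).1) (prod_nonneg fun x _ => sub_nonneg.mpr (hp x).2)

theorem prodMeasure_mul_prod_le {p q : X → ℝ} {c : ℝ} (hp : ∀ x, p x ∈ Set.Icc (0 : ℝ) 1)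
    (hq : ∀ x, 0 ≤ q x) (hpq : ∀ x, (1 - p x) * q x ≤ c * p x) {W T : Finset X}
    (hWT : Disjoint W T) :
    prodMeasure p W * ∏ x ∈ T, q x ≤ prodMeasure p (W ∪ T) * c ^ #T := by
  have hcompl : ∏ x ∈ Wᶜ, (1 - p x) = (∏ x ∈ (W ∪ T)ᶜ, (1 - p x)) * ∏ x ∈ T, (1 - p x) := by
    rw [compl_union, ← sdiff_eq_inter_compl,
      prod_sdiff (subset_compl_iff_disjoint_left.mpr hWT)]
  have hexchange : (∏ x ∈ T, (1 - p x)) * ∏ x ∈ T, q x ≤ c ^ #T * ∏ x ∈ T, p x := by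
    rw [← prod_const, ← prod_mul_distrib, ← prod_mul_distrib]
    exact prod_le_prod (fun x _ => mul_nonneg (sub_nonneg.mpr (hp x).2) (hq x)) fun x _ => hpq x
  have hcommon : 0 ≤ (∏ x ∈ W, p x) * ∏ x ∈ (W ∪ T)ᶜ, (1 - p x) :=
    mul_nonneg (prod_nonneg fun x _ => (hp x).1) (prod_nonneg fun x _ => sub_nonneg.mpr (hp x).2)
  calc prodMeasure p W * ∏ x ∈ T, q x
      = ((∏ x ∈ W, p x) * ∏ x ∈ (W ∪ T)ᶜ, (1 - p x)) *
          ((∏ x ∈ T, (1 - p x)) * ∏ x ∈ T, q x) := by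
        rw [prodMeasure, hcompl]
        ring
    _ ≤ ((∏ x ∈ W, p x) * ∏ x ∈ (W ∪ T)ᶜ, (1 - p x)) * (c ^ #T * ∏ x ∈ T, p x) :=
        mul_le_mul_of_nonneg_left hexchange hcommon
    _ = prodMeasure p (W ∪ T) * c ^ #T := by
        rw [prodMeasure, prod_union hWT]
        ring

theorem prodMeasure_mul_qCost_largeFrag_le {p q : X → ℝ} {c : ℝ}
    (hp : ∀ x, p x ∈ Set.Icc (0 : ℝ) 1) (hq : ∀ x, 0 ≤ q x)
    (hpq : ∀ x, (1 - p x) * q x ≤ c * p x) (m : ℕ) (H : Finset (Finset X)) (W : Finset X) :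
    prodMeasure p W * qCost q (largeFrag m H W) ≤
      ∑ T ∈ largeFrag m H W, prodMeasure p (W ∪ T) * c ^ #T := by
  calc prodMeasure p W * qCost q (largeFrag m H W)
      ≤ prodMeasure p W * eCost q (largeFrag m H W) :=
        mul_le_mul_of_nonneg_left (qCost_le_eCost hq (subset_upClosure _)) (prodMeasure_nonneg hp W)
    _ = ∑ T ∈ largeFrag m H W, prodMeasure p W * ∏ x ∈ T, q x := mul_sum ..
    _ ≤ ∑ T ∈ largeFrag m H W, prodMeasure p (W ∪ T) * c ^ #T :=
        sum_le_sum fun T hT => prodMeasure_mul_prod_le hp hq hpq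
          (disjoint_of_mem_fragments (mem_fragments_of_mem_largeFrag hT))

theorem sum_pow_card_largeFrag_sdiff_le {R : Type*} [CommSemiring R] [PartialOrder R]
    [IsOrderedRing R] {c : R} (hc : 0 ≤ c) {ℓ : ℕ} (m : ℕ) {H : Finset (Finset X)}
    (hH : ∀ S ∈ H, #S ≤ ℓ) {Z : Finset X} (hZ : Z ∈ upClosure H) :
    ∑ T ∈ Z.powerset with T ∈ largeFrag m H (Z \ T), c ^ #T ≤
      ∑ j ∈ Icc m ℓ, c ^ j * (ℓ.choose j : R) := by
  obtain ⟨S, hS, hSZ⟩ := mem_upClosure.mp hZ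
  have hsub : {T ∈ Z.powerset | T ∈ largeFrag m H (Z \ T)} ⊆ {T ∈ S.powerset | m ≤ #T} := by
    intro T hT
    obtain ⟨hTZ, hlarge⟩ := mem_filter.mp hT
    obtain ⟨hmin, hm⟩ := mem_largeFrag.mp hlarge
    have hSunion : S ⊆ Z \ T ∪ T := by rwa [sdiff_union_of_subset (mem_powerset.mp hTZ)]
    exact mem_filter.mpr ⟨mem_powerset.mpr (subset_of_mem_minFragments hmin hS hSunion), hm⟩
  calc ∑ T ∈ Z.powerset with T ∈ largeFrag m H (Z \ T), c ^ #T
      ≤ ∑ T ∈ S.powerset with m ≤ #T, c ^ #T :=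
        sum_le_sum_of_subset_of_nonneg hsub fun T _ _ => pow_nonneg hc _
    _ ≤ ∑ j ∈ Icc m ℓ, c ^ j * (ℓ.choose j : R) := sum_pow_card_filter_powerset_le hc (hH S hS) m

theorem cost_lemma_general {p q : X → ℝ} {c : ℝ} (hc : 0 ≤ c)
    (hp : ∀ x, p x ∈ Set.Icc (0 : ℝ) 1) (hq : ∀ x, 0 ≤ q x)
    (hpq : ∀ x, (1 - p x) * q x ≤ c * p x) {ℓ : ℕ} (m : ℕ) {H : Finset (Finset X)}
    (hH : ∀ S ∈ H, #S ≤ ℓ) :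
    ∑ W, prodMeasure p W * qCost q (largeFrag m H W) ≤
      prInUpClosure p H * ∑ j ∈ Icc m ℓ, c ^ j * (ℓ.choose j : ℝ) := by
  calc ∑ W, prodMeasure p W * qCost q (largeFrag m H W)
      ≤ ∑ W, ∑ T ∈ largeFrag m H W, prodMeasure p (W ∪ T) * c ^ #T :=
        sum_le_sum fun W _ => prodMeasure_mul_qCost_largeFrag_le hp hq hpq m H W
    _ = ∑ Z ∈ upClosure H, ∑ T ∈ Z.powerset with T ∈ largeFrag m H (Z \ T),
          prodMeasure p Z * c ^ #T :=
        sum_sum_union_eq_sum_sum_sdiff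
          (fun _ _ hT => disjoint_of_mem_fragments (mem_fragments_of_mem_largeFrag hT))
          (fun _ _ hT => mem_upClosure.mpr
            (exists_subset_union_of_mem_fragments (mem_fragments_of_mem_largeFrag hT)))
          fun Z T => prodMeasure p Z * c ^ #T
    _ ≤ ∑ Z ∈ upClosure H, prodMeasure p Z * ∑ j ∈ Icc m ℓ, c ^ j * (ℓ.choose j : ℝ) := by
        refine sum_le_sum fun Z hZ => ?_
        rw [← mul_sum]
        exact mul_le_mul_of_nonneg_left (sum_pow_card_largeFrag_sdiff_le hc m hH hZ)
          (prodMeasure_nonneg hp Z)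
    _ = prInUpClosure p H * ∑ j ∈ Icc m ℓ, c ^ j * (ℓ.choose j : ℝ) := (sum_mul ..).symm

end Weights

/-- Lemma 1: for `p_x = 1 - (1-q_x)^L` and `ℓ`-bounded `H`,
`E[c_q(L_m(H, X_p))] ≤ Pr[X_p ∈ ⟨H⟩] · Σ_{j=m}^{ℓ} L^{-j} · C(ℓ, j)`. -/
theorem cost_lemma {X : Type*} [Fintype X] [DecidableEq X]
    (L : ℝ) (hL : 1 ≤ L) (ℓ m : ℕ) (hm : 1 ≤ m) (hmℓ : m ≤ ℓ)
    (q : X → ℝ) (hq : ∀ x, q x ∈ Set.Ioo (0 : ℝ) 1)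
    (p : X → ℝ) (hp : ∀ x, p x = 1 - (1 - q x) ^ L)
    (H : Finset (Finset X)) (hbd : ∀ S ∈ H, S.card ≤ ℓ) :
    ∑ W : Finset X, prodMeasure p W * qCost q (largeFrag m H W) ≤
      prInUpClosure p H * ∑ j ∈ Finset.Icc m ℓ, (1 / L ^ j) * (ℓ.choose j : ℝ) := by
  obtain rfl : p = fun x => 1 - (1 - q x) ^ L := funext hp
  have hL0 : 0 < L := one_pos.trans_le hL
  have hq01 : ∀ x, q x ∈ Set.Icc (0 : ℝ) 1 := fun x => Set.Ioo_subset_Icc_self (hq x)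
  simpa only [one_div_pow] using cost_lemma_general (one_div_nonneg.mpr hL0.le)
    (fun x => one_sub_one_sub_rpow_mem_Icc hL0.le (hq01 x)) (fun x => (hq01 x).1)
    (fun x => by simpa only [sub_sub_cancel] using one_sub_rpow_mul_self_le hL0 (hq01 x)) m hbd
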